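/- (Determinantal minor summation formula) Let l be even, ln ≤ N, H(s) an ln×N matrix for 1 ≤ s ≤ r, and A an r-dimensional l-block array of size N. Then ∑_{P^(1),…,P^(r) ∈ C([N],ln)} Pf^[l,r](A_{P^(1),…,P^(r)}) ∏_{s=1}^r det H(s)_{[ln],P^(s)} = Pf^[l,r](Q), where Q(I^(1),…,I^(r)) = ∑_{K^(1),…,K^(r) ∈ C([N],l)} A(K^(1),…,K^(r)) ∏_{s=1}^r det(H(s)_{I^(s),K^(s)}). -/

import Mathlib

open scoped Classical
open Finset Equiv

noncomputable section

variable {F : Type*} [Field F] [CharZero F]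

/-- The hyperdeterminant `det^[m]` of an `m`-dimensional tensor of size `n`:
`∑_{σ₁,…,σ_{m-1}} sgn(σ₁⋯σ_{m-1}) ∏_i A(i, σ₁ i, …, σ_{m-1} i)`, encoded as a sum over
`m`-tuples of permutations whose `0`-th component is forced to be the identity. -/
def hyperdet (m n : ℕ) (A : (Fin m → Fin n) → F) : F :=
  ∑ σ : Fin m → Equiv.Perm (Fin n),
    if (∀ k : Fin m, k.1 = 0 → σ k = 1) then
      (∏ k, ((Equiv.Perm.sign (σ k) : ℤ) : F)) * ∏ i, A fun k => σ k i
    else 0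

/-- `blk l n j i` is the `i`-th entry of the `j`-th consecutive block of length `l` in `[l*n]`. -/
def blk (l n : ℕ) (j : Fin n) (i : Fin l) : Fin (l * n) :=
  ⟨j.1 * l + i.1, by
    have hi := i.2; have hj := j.2
    calc j.1 * l + i.1 < (j.1 + 1) * l := by rw [Nat.add_mul, Nat.one_mul]; omega
      _ ≤ n * l := Nat.mul_le_mul_right l hj
      _ = l * n := Nat.mul_comm n l⟩

/-- A permutation of `[l*n]` is block-increasing if it is increasing on each of the
`n` consecutive blocks of length `l`. -/
def BlockInc (l n : ℕ) (σ : Equiv.Perm (Fin (l * n))) : Prop :=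
  ∀ j : Fin n, StrictMono fun i : Fin l => σ (blk l n j i)

/-- The `j`-th block of `σ`, as a subset of `[l*n]`. -/
def blkSet (l n : ℕ) (σ : Equiv.Perm (Fin (l * n))) (j : Fin n) : Finset (Fin (l * n)) :=
  Finset.image (fun i => σ (blk l n j i)) Finset.univ

/-- The hyperpfaffian `Pf^[l,m]` of an `m`-dimensional `l`-block array of size `l*n`
(the `m` dimensions are indexed by an arbitrary finite type `ι`). -/
def hyperpf (l n : ℕ) {ι : Type*} [Fintype ι]
    (B : (ι → Finset (Fin (l * n))) → F) : F :=
  (n.factorial : F)⁻¹ *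
    ∑ σ : ι → Equiv.Perm (Fin (l * n)),
      if ∀ s, BlockInc l n (σ s) then
        (∏ s, ((Equiv.Perm.sign (σ s) : ℤ) : F)) *
          ∏ k : Fin n, B fun s => blkSet l n (σ s) k
      else 0

/-- The hyperhafnian `Hf^[l,m]` (same sum as the hyperpfaffian, without signs). -/
def hyperhf (l n : ℕ) {ι : Type*} [Fintype ι]
    (B : (ι → Finset (Fin (l * n))) → F) : F :=
  (n.factorial : F)⁻¹ *
    ∑ σ : ι → Equiv.Perm (Fin (l * n)),
      if ∀ s, BlockInc l n (σ s) then
        ∏ k : Fin n, B fun s => blkSet l n (σ s) k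
      else 0

theorem blk_injective (l n : ℕ) :
    Function.Injective (fun p : Fin n × Fin l => blk l n p.1 p.2) := by
  rintro ⟨j, i⟩ ⟨j', i'⟩ h
  have h1 : j.1 * l + i.1 = j'.1 * l + i'.1 := by
    simpa [blk] using congrArg Fin.val h
  have hi := i.2
  have hi' := i'.2
  have hl : 0 < l := by omega
  have hd : j.1 = j'.1 := by
    have := congrArg (fun x => x / l) h1
    simpa [Nat.mul_comm _ l, Nat.mul_add_div hl, Nat.div_eq_of_lt hi,
      Nat.div_eq_of_lt hi'] using this
  have he : i.1 = i'.1 := by rw [hd] at h1; omega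
  ext <;> simp [hd, he]

def blkEquiv (l n : ℕ) : Fin n × Fin l ≃ Fin (l * n) :=
  Equiv.ofBijective (fun p : Fin n × Fin l => blk l n p.1 p.2)
    ((Fintype.bijective_iff_injective_and_card _).2
      ⟨blk_injective l n, by simp [Nat.mul_comm]⟩)

theorem blkEquiv_apply (l n : ℕ) (j : Fin n) (i : Fin l) :
    blkEquiv l n (j, i) = blk l n j i := rfl

def blkPerm (l n : ℕ) (ρ : Fin n → Equiv.Perm (Fin l)) : Equiv.Perm (Fin (l * n)) :=
  (blkEquiv l n).permCongr (Equiv.prodCongrRight ρ)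

theorem blkPerm_blk (l n : ℕ) (ρ : Fin n → Equiv.Perm (Fin l)) (j : Fin n) (i : Fin l) :
    blkPerm l n ρ (blk l n j i) = blk l n j (ρ j i) := by
  simp [blkPerm, ← blkEquiv_apply, Equiv.permCongr_apply]

theorem blkPerm_sign (l n : ℕ) (ρ : Fin n → Equiv.Perm (Fin l)) :
    Equiv.Perm.sign (blkPerm l n ρ) = ∏ k, Equiv.Perm.sign (ρ k) := by
  rw [blkPerm, Equiv.Perm.sign_permCongr, Equiv.Perm.sign_prodCongrRight]

theorem blk_ext {l n : ℕ} {α : Type*} {f g : Fin (l * n) → α}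
    (h : ∀ j i, f (blk l n j i) = g (blk l n j i)) : f = g := by
  funext x
  obtain ⟨⟨j, i⟩, rfl⟩ := (blkEquiv l n).surjective x
  exact h j i

theorem prod_blk {l n : ℕ} {M : Type*} [CommMonoid M] (f : Fin (l * n) → M) :
    ∏ x, f x = ∏ k : Fin n, ∏ i : Fin l, f (blk l n k i) := by
  rw [← (blkEquiv l n).prod_comp, Fintype.prod_prod_type]
  rfl

theorem strictMono_eq_of_range {m : ℕ} {α : Type*} [LinearOrder α] {f g : Fin m → α}
    (hf : StrictMono f) (hg : StrictMono g) (h : Set.range f = Set.range g) : f = g := by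
  have := (OrderEmbedding.range_inj (f := OrderEmbedding.ofStrictMono f hf)
    (g := OrderEmbedding.ofStrictMono g hg)).1 (by simpa using h)
  funext x
  exact congrArg (fun e => e x) this

theorem perm_factor_bij (l n : ℕ) : Function.Bijective
    (fun p : {σ : Equiv.Perm (Fin (l * n)) // BlockInc l n σ} × (Fin n → Equiv.Perm (Fin l)) =>
      p.1.1 * blkPerm l n p.2) := by
  constructor
  · rintro ⟨⟨σ, hσ⟩, ρ⟩ ⟨⟨σ', hσ'⟩, ρ'⟩ h
    have h1 : ∀ j i, σ (blk l n j (ρ j i)) = σ' (blk l n j (ρ' j i)) := by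
      intro j i
      have := congrArg (fun e : Equiv.Perm (Fin (l * n)) => e (blk l n j i)) h
      simpa [blkPerm_blk] using this
    have h2 : σ = σ' := by
      apply Equiv.coe_fn_injective
      apply blk_ext
      intro j i
      have : (fun i => σ (blk l n j i)) = (fun i => σ' (blk l n j i)) := by
        apply strictMono_eq_of_range (hσ j) (hσ' j)
        rw [← (ρ j).surjective.range_comp (fun i => σ (blk l n j i)),
          ← (ρ' j).surjective.range_comp (fun i => σ' (blk l n j i))]
        congr 1
        funext i
        exact h1 j i
      exact congrFun this i
    subst h2
    have h3 : ρ = ρ' := by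
      funext j
      ext i
      have := blk_injective l n (a₁ := (j, ρ j i)) (a₂ := (j, ρ' j i)) (σ.injective (h1 j i))
      simpa [Fin.ext_iff] using this
    subst h3
    rfl
  · intro τ
    let ρ : Fin n → Equiv.Perm (Fin l) := fun j => Tuple.sort (fun i => τ (blk l n j i))
    refine ⟨⟨⟨τ * blkPerm l n ρ, ?_⟩, fun j => (ρ j)⁻¹⟩, ?_⟩
    · intro j
      apply Monotone.strictMono_of_injective
      · have := Tuple.monotone_sort (fun i => τ (blk l n j i))
        intro a b hab
        simpa [blkPerm_blk] using this hab
      · intro a b hab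
        have := blk_injective l n (a₁ := (j, a)) (a₂ := (j, b))
          ((τ * blkPerm l n ρ).injective hab)
        simpa using this
    · apply Equiv.coe_fn_injective
      apply blk_ext
      intro j i
      simp [blkPerm_blk]

theorem laplace_blocks {R : Type*} [CommRing R] (l n : ℕ)
    (M : Matrix (Fin (l * n)) (Fin (l * n)) R) :
    (∑ σ : {σ : Equiv.Perm (Fin (l * n)) // BlockInc l n σ},
      ((Equiv.Perm.sign σ.1 : ℤ) : R) *
        ∏ k : Fin n, Matrix.det (Matrix.of fun a b : Fin l =>
          M (σ.1 (blk l n k a)) (blk l n k b))) = M.det := by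
  rw [Matrix.det_apply', ← (perm_factor_bij l n).sum_comp, Fintype.sum_prod_type]
  refine Finset.sum_congr rfl fun σ _ => ?_
  simp_rw [Matrix.det_apply']
  rw [Finset.prod_univ_sum, Finset.mul_sum, Fintype.piFinset_univ]
  refine Finset.sum_congr rfl fun ρ _ => ?_
  rw [prod_blk, Equiv.Perm.sign_mul, blkPerm_sign, Finset.prod_mul_distrib]
  simp [blkPerm_blk, mul_assoc]

theorem sum_finset_eq_sum_emb {R : Type*} [AddCommMonoid R] (r m N : ℕ)
    (Φ : (Fin r → (Fin m ↪o Fin N)) → R) :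
    (∑ P : Fin r → Finset (Fin N),
      if h : ∀ s, (P s).card = m then Φ (fun s => (P s).orderEmbOfFin (h s)) else 0)
    = ∑ g : Fin r → (Fin m ↪o Fin N), Φ g := by
  symm
  have key : ∀ (e : Fin m ↪o Fin N) (h : (univ.map e.toEmbedding).card = m),
      (univ.map e.toEmbedding).orderEmbOfFin h = e := by
    intro e h
    exact (Finset.orderEmbOfFin_unique' h (fun x => by simp)).symm
  apply Finset.sum_of_injOn (fun g s => univ.map (g s).toEmbedding)
  · intro g _ g' _ h
    funext s
    have h1 := congrFun h s
    have hc : (univ.map (g s).toEmbedding).card = m := by simp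
    have hc' : (univ.map (g' s).toEmbedding).card = m := by simp
    rw [← key (g s) hc, ← key (g' s) hc']
    simp only at h1
    simp only [h1]
  · intro g _
    simp
  · intro P _ hP
    split_ifs with h
    · exfalso
      apply hP
      refine ⟨fun s => (P s).orderEmbOfFin (h s), by simp, ?_⟩
      funext s
      simp [Finset.map_orderEmbOfFin_univ]
    · rfl
  · intro g _
    have : ∀ s, (univ.map (g s).toEmbedding).card = m := by simp
    rw [dif_pos this]
    simp only [key]

theorem hyperpf_eq (l n r : ℕ) (B : (Fin r → Finset (Fin (l * n))) → F) :
    hyperpf l n B = (n.factorial : F)⁻¹ *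
      ∑ σ : Fin r → {σ : Equiv.Perm (Fin (l * n)) // BlockInc l n σ},
        (∏ s, ((Equiv.Perm.sign (σ s).1 : ℤ) : F)) *
          ∏ k : Fin n, B fun s => blkSet l n (σ s).1 k := by
  unfold hyperpf
  congr 1
  symm
  apply Finset.sum_of_injOn (fun σ s => (σ s).1)
  · intro g _ g' _ h
    funext s
    exact Subtype.ext (congrFun h s)
  · intro g _
    simp
  · intro σ _ hσ
    split_ifs with h
    · exact absurd ⟨fun s => ⟨σ s, h s⟩, by simp, rfl⟩ hσ
    · rfl
  · intro σ _
    rw [if_pos (fun s => (σ s).2)]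

def glue (l n N : ℕ) (G : Fin n → (Fin l ↪o Fin N)) (x : Fin (l * n)) : Fin N :=
  G ((blkEquiv l n).symm x).1 ((blkEquiv l n).symm x).2

theorem glue_blk (l n N : ℕ) (G : Fin n → (Fin l ↪o Fin N)) (k : Fin n) (i : Fin l) :
    glue l n N G (blk l n k i) = G k i := by
  simp [glue, ← blkEquiv_apply]

def unglue (l n N : ℕ) (P : Fin (l * n) ↪o Fin N)
    (σ : {σ : Equiv.Perm (Fin (l * n)) // BlockInc l n σ}) (k : Fin n) : Fin l ↪o Fin N :=
  OrderEmbedding.ofStrictMono (fun i => P (σ.1 (blk l n k i)))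
    (P.strictMono.comp (σ.2 k))

theorem glue_unglue (l n N : ℕ) (P : Fin (l * n) ↪o Fin N)
    (σ : {σ : Equiv.Perm (Fin (l * n)) // BlockInc l n σ}) :
    glue l n N (unglue l n N P σ) = fun x => P (σ.1 x) := by
  apply blk_ext
  intro j i
  rw [glue_blk]
  rfl

theorem unglue_inj (l n N : ℕ) (P P' : Fin (l * n) ↪o Fin N)
    (σ σ' : {σ : Equiv.Perm (Fin (l * n)) // BlockInc l n σ})
    (h : unglue l n N P σ = unglue l n N P' σ') : P = P' ∧ σ = σ' := by
  have h1 : (fun x => P (σ.1 x)) = fun x => P' (σ'.1 x) := by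
    rw [← glue_unglue, ← glue_unglue, h]
  have h2 : P = P' := by
    apply OrderEmbedding.range_inj.1
    rw [← σ.1.surjective.range_comp P, ← σ'.1.surjective.range_comp P']
    exact congrArg Set.range h1
  subst h2
  refine ⟨rfl, Subtype.ext (Equiv.ext fun x => P.injective (congrFun h1 x))⟩

theorem unglue_surj (l n N : ℕ) (G : Fin n → (Fin l ↪o Fin N))
    (hG : Function.Injective (glue l n N G)) : ∃ P σ, unglue l n N P σ = G := by
  let f := glue l n N G
  have hP : StrictMono (f ∘ Tuple.sort f) :=
    (Tuple.monotone_sort f).strictMono_of_injective (hG.comp (Tuple.sort f).injective)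
  have hσ : BlockInc l n (Tuple.sort f)⁻¹ := by
    intro j a b hab
    apply hP.lt_iff_lt.1
    simpa [f, glue_blk] using hab
  refine ⟨OrderEmbedding.ofStrictMono _ hP, ⟨(Tuple.sort f)⁻¹, hσ⟩, ?_⟩
  funext k
  ext i
  simp [unglue, f, glue_blk]

theorem lhs_reindex (l r n N : ℕ)
    (H : Fin r → Matrix (Fin (l * n)) (Fin N) F)
    (A : (Fin r → Finset (Fin N)) → F) :
    (∑ P : Fin r → (Fin (l * n) ↪o Fin N),
      ∑ σ : Fin r → {σ : Equiv.Perm (Fin (l * n)) // BlockInc l n σ},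
        ((∏ s, ((Equiv.Perm.sign (σ s).1 : ℤ) : F)) *
          ∏ k : Fin n, A fun s => (blkSet l n (σ s).1 k).map (P s).toEmbedding) *
        ∏ s : Fin r, Matrix.det (Matrix.of fun a (b : Fin (l * n)) => H s a (P s b)))
    = ∑ G : Fin n → Fin r → (Fin l ↪o Fin N),
        (∏ k, A fun s => univ.map (G k s).toEmbedding) *
        ∏ s, Matrix.det (Matrix.of fun a (b : Fin (l * n)) =>
          H s a (glue l n N (fun k => G k s) b)) := by
  rw [← Fintype.sum_prod_type']
  apply Finset.sum_of_injOn (fun p k s => unglue l n N (p.1 s) (p.2 s) k)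
  · rintro ⟨P, σ⟩ _ ⟨P', σ'⟩ _ h
    have : ∀ s, P s = P' s ∧ σ s = σ' s := fun s =>
      unglue_inj l n N _ _ _ _ (funext fun k => congrFun (congrFun h k) s)
    ext1
    · exact funext fun s => (this s).1
    · exact funext fun s => (this s).2
  · intro _ _
    simp
  · intro G _ hG
    by_cases hi : ∀ s, Function.Injective (glue l n N (fun k => G k s))
    · exfalso
      apply hG
      choose P σ hPσ using fun s => unglue_surj l n N (fun k => G k s) (hi s)
      refine ⟨(P, σ), by simp, ?_⟩
      funext k s
      exact congrFun (hPσ s) k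
    · push Not at hi
      obtain ⟨s, hs⟩ := hi
      simp only [Function.Injective] at hs
      push Not at hs
      obtain ⟨x, y, hxy, hne⟩ := hs
      apply mul_eq_zero_of_right
      apply Finset.prod_eq_zero (Finset.mem_univ s)
      apply Matrix.det_zero_of_column_eq hne
      intro a
      simp [hxy]
  · rintro ⟨P, σ⟩ _
    simp only
    have h1 : ∀ s, (fun k => unglue l n N (P s) (σ s) k) = unglue l n N (P s) (σ s) :=
      fun s => rfl
    simp only [h1, glue_unglue]
    have h2 : ∀ k s, univ.map (unglue l n N (P s) (σ s) k).toEmbedding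
        = (blkSet l n (σ s).1 k).map (P s).toEmbedding := by
      intro k s
      ext x
      simp [blkSet, unglue]
    simp only [h2]
    have h3 : ∀ s, Matrix.det (Matrix.of fun a (b : Fin (l * n)) => H s a (P s ((σ s).1 b)))
        = ((Equiv.Perm.sign (σ s).1 : ℤ) : F) *
          Matrix.det (Matrix.of fun a (b : Fin (l * n)) => H s a (P s b)) := by
      intro s
      rw [← Matrix.det_permute']
      rfl
    simp only [h3, Finset.prod_mul_distrib]
    ring

theorem blkSet_card (l n : ℕ) (σ : {σ : Equiv.Perm (Fin (l * n)) // BlockInc l n σ})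
    (k : Fin n) : (blkSet l n σ.1 k).card = l := by
  rw [blkSet, Finset.card_image_of_injective _ (σ.2 k).injective]
  simp

theorem blkSet_emb (l n : ℕ) (σ : {σ : Equiv.Perm (Fin (l * n)) // BlockInc l n σ})
    (k : Fin n) (h : (blkSet l n σ.1 k).card = l) (a : Fin l) :
    (blkSet l n σ.1 k).orderEmbOfFin h a = σ.1 (blk l n k a) := by
  have := Finset.orderEmbOfFin_unique h (f := fun i => σ.1 (blk l n k i))
    (fun x => by simp [blkSet]) (σ.2 k)
  exact (congrFun this a).symm

/-- Determinantal minor summation formula. -/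
theorem det_minor_summation (l r n N : ℕ) (hl : Even l) (hl0 : 0 < l) (hr : 0 < r)
    (hn : 0 < n) (hN : l * n ≤ N)
    (H : Fin r → Matrix (Fin (l * n)) (Fin N) F)
    (A : (Fin r → Finset (Fin N)) → F)
    (Q : (Fin r → Finset (Fin (l * n))) → F)
    (hQ : ∀ I : Fin r → Finset (Fin (l * n)), ∀ hI : ∀ s, (I s).card = l,
      Q I = ∑ K : Fin r → Finset (Fin N),
        if hK : ∀ s, (K s).card = l then
          A K * ∏ s : Fin r,
            Matrix.det (Matrix.of fun a b : Fin l =>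
              H s ((I s).orderEmbOfFin (hI s) a) ((K s).orderEmbOfFin (hK s) b))
        else 0) :
    (∑ P : Fin r → Finset (Fin N),
        if hP : ∀ s, (P s).card = l * n then
          hyperpf l n (fun I : Fin r → Finset (Fin (l * n)) =>
              A fun s => (I s).map ((P s).orderEmbOfFin (hP s)).toEmbedding) *
            ∏ s : Fin r,
              Matrix.det (Matrix.of fun a (b : Fin (l * n)) =>
                H s a ((P s).orderEmbOfFin (hP s) b))
        else 0)
    = hyperpf l n Q := by
  have hLHS : (∑ P : Fin r → Finset (Fin N),
        if hP : ∀ s, (P s).card = l * n then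
          hyperpf l n (fun I : Fin r → Finset (Fin (l * n)) =>
              A fun s => (I s).map ((P s).orderEmbOfFin (hP s)).toEmbedding) *
            ∏ s : Fin r,
              Matrix.det (Matrix.of fun a (b : Fin (l * n)) =>
                H s a ((P s).orderEmbOfFin (hP s) b))
        else 0) = _ :=
    sum_finset_eq_sum_emb r (l * n) N (fun g =>
      hyperpf l n (fun I : Fin r → Finset (Fin (l * n)) =>
          A fun s => (I s).map (g s).toEmbedding) *
        ∏ s : Fin r, Matrix.det (Matrix.of fun a (b : Fin (l * n)) => H s a (g s b)))
  rw [hLHS]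
  have hQ' : ∀ (σ : Fin r → {σ : Equiv.Perm (Fin (l * n)) // BlockInc l n σ}) (k : Fin n),
      Q (fun s => blkSet l n (σ s).1 k) = ∑ g : Fin r → (Fin l ↪o Fin N),
        (A fun s => univ.map (g s).toEmbedding) * ∏ s : Fin r,
          Matrix.det (Matrix.of fun a b : Fin l => H s ((σ s).1 (blk l n k a)) (g s b)) := by
    intro σ k
    rw [hQ _ (fun s => blkSet_card l n (σ s) k), ← sum_finset_eq_sum_emb r l N]
    simp only [blkSet_emb, Finset.map_orderEmbOfFin_univ]
  simp only [hyperpf_eq, hQ', mul_assoc ((n.factorial : F)⁻¹)]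
  rw [← Finset.mul_sum]
  congr 1
  simp only [Finset.sum_mul]
  rw [lhs_reindex]
  simp only [Finset.prod_univ_sum, Fintype.piFinset_univ, Finset.mul_sum]
  rw [Finset.sum_comm]
  refine Finset.sum_congr rfl fun G _ => ?_
  have hlap : ∀ s, Matrix.det (Matrix.of fun a (b : Fin (l * n)) =>
          H s a (glue l n N (fun k => G k s) b)) = _ := fun s => (laplace_blocks l n _).symm
  simp only [hlap]
  rw [Finset.prod_univ_sum, Fintype.piFinset_univ, Finset.mul_sum]
  refine Finset.sum_congr rfl fun σ _ => ?_
  simp only [Finset.prod_mul_distrib, Matrix.of_apply, glue_blk]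
  rw [Finset.prod_comm (s := (univ : Finset (Fin r)))]
  ring
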